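/- arXiv:1209.3397 — 2 statements merged into one kernel-verified Lean document; each statement's English description precedes it below -/
import Mathlib

section
/- Normal form for the approximate (frozen) system: define, for φ ∈ ℝ and τ ≠ τ_*, S^a₁(φ,τ) := −H̃₁^{(1)}(I_*,φ,τ_*)/Ω(τ), S^a₂(φ,τ) := −ω'_*·H̃₁^{(2)}(I_*,φ,τ_*)/Ω(τ)³, S^a₃(φ,τ) := −3·ω'_*²·H̃₁^{(3)}(I_*,φ,τ_*)/Ω(τ)⁵, S^a₄(φ,τ) := −15·ω'_*³·H̃₁^{(4)}(I_*,φ,τ_*)/Ω(τ)⁷. Then each S^a_j is 2π-periodic in φ with ⟨S^a_j⟩^φ = 0, and they satisfy Ω(τ)·∂S^a₁/∂φ + H̃₁(I_*,φ,τ_*) = 0 and Ω(τ)·∂S^a_{j+1}/∂φ + ∂S^a_j/∂τ = 0 for j = 1, 2, 3. Consequently, with J_a(t) := I_a(t) − ε·(∂S^a₁/∂φ + ε·∂S^a₂/∂φ + ε²·∂S^a₃/∂φ + ε³·∂S^a₄/∂φ)(φ_a(εt), εt), along any solution of the approximate system with εt ≠ τ_* one has exactly dJ_a/dt = −ε⁵·∂²S^a₄/∂τ∂φ(φ_a(εt),εt)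 = −105·ε⁵·ω'_*⁴·H̃₁^{(3)}(I_*, φ_a(εt), τ_*)/Ω(εt)⁸. -/
open Real MeasureTheory Set Filter Topology

noncomputable section

/-- Partial derivative in the first (action) variable. -/
def pdI (f : ℝ → ℝ → ℝ → ℝ) (x y z : ℝ) : ℝ := deriv (fun x' => f x' y z) x

/-- Partial derivative in the second (angle) variable. -/
def pdPhi (f : ℝ → ℝ → ℝ → ℝ) (x y z : ℝ) : ℝ := deriv (fun y' => f x y' z) y

/-- Partial derivative in the third (slow time) variable. -/
def pdTau (f : ℝ → ℝ → ℝ → ℝ) (x y z : ℝ) : ℝ := deriv (fun z' => f x y z') z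

/-- n-th partial derivative in the first variable. -/
def pdIn (n : ℕ) (f : ℝ → ℝ → ℝ → ℝ) (x y z : ℝ) : ℝ :=
  iteratedDeriv n (fun x' => f x' y z) x

/-- Average over the angle. -/
def avgPhi (f : ℝ → ℝ → ℝ → ℝ) (x z : ℝ) : ℝ :=
  (1/(2*π)) * ∫ y in (0:ℝ)..(2*π), f x y z

/-- Oscillating part  H̃ = H − ⟨H⟩^φ. -/
def tilde (f : ℝ → ℝ → ℝ → ℝ) (x y z : ℝ) : ℝ := f x y z - avgPhi f x z

/-- Derivative in the first variable of a function of (I, τ). -/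
def dI1 (g : ℝ → ℝ → ℝ) (x z : ℝ) : ℝ := deriv (fun x' => g x' z) x

/-- n-th derivative in the first variable of a function of (I, τ). -/
def dIn (n : ℕ) (g : ℝ → ℝ → ℝ) (x z : ℝ) : ℝ := iteratedDeriv n (fun x' => g x' z) x

/-- ⟨H̃₁²⟩^φ as a function of (I, τ). -/
def sqAvg (H₁ : ℝ → ℝ → ℝ → ℝ) (x z : ℝ) : ℝ :=
  avgPhi (fun a b c => (tilde H₁ a b c)^2) x z

/-- u₁ = H̃₁/ω. -/
def u1 (H₁ : ℝ → ℝ → ℝ → ℝ) (ω : ℝ → ℝ) (x y z : ℝ) : ℝ := tilde H₁ x y z / ω z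

/-- v₁ = −∫₀^φ ∂u₁/∂I dψ + ⟨∫₀^φ ∂u₁/∂I dψ⟩^φ. -/
def v1 (H₁ : ℝ → ℝ → ℝ → ℝ) (ω : ℝ → ℝ) (x y z : ℝ) : ℝ :=
  -(∫ ψ in (0:ℝ)..y, pdI (u1 H₁ ω) x ψ z)
  + avgPhi (fun a b c => ∫ ψ in (0:ℝ)..b, pdI (u1 H₁ ω) a ψ c) x z

/-- 𝓡₂(J,τ) = −(1/(2ω)) ∂²⟨H̃₁²⟩^φ/∂I². -/
def R2fun (H₁ : ℝ → ℝ → ℝ → ℝ) (ω : ℝ → ℝ) (x z : ℝ) : ℝ :=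
  -(1/(2 * ω z)) * dIn 2 (sqAvg H₁) x z

/-- The hat operator: zero-mean angular antiderivative. -/
def hat (g : ℝ → ℝ → ℝ → ℝ) (x y z : ℝ) : ℝ :=
  (∫ ψ in (0:ℝ)..y, g x ψ z)
  - avgPhi (fun a b c => ∫ ψ in (0:ℝ)..b, g a ψ c) x z

/-- k-fold application of the hat operator. -/
def hatIter (g : ℝ → ℝ → ℝ → ℝ) : ℕ → ℝ → ℝ → ℝ → ℝ
  | 0 => g
  | n+1 => hat (hatIter g n)

/-- Partial derivative in the first variable of a function of (φ, τ). -/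
def pdy (g : ℝ → ℝ → ℝ) (y z : ℝ) : ℝ := deriv (fun y' => g y' z) y

/-- Partial derivative in the second variable of a function of (φ, τ). -/
def pdz (g : ℝ → ℝ → ℝ) (y z : ℝ) : ℝ := deriv (fun z' => g y z') z

/-- Normal form data: periodicity/zero mean of S₁,…,S₄ and the homological equations. -/
def HomEqs (DI Dτ : Set ℝ) (τs : ℝ) (ω : ℝ → ℝ)
    (H₁ S₁ S₂ S₃ S₄ : ℝ → ℝ → ℝ → ℝ) (R₂ R₃ R₄ : ℝ → ℝ → ℝ) : Prop :=
  (∀ x ∈ DI, ∀ z ∈ Dτ, z ≠ τs →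
      (Function.Periodic (fun y => S₁ x y z) (2*π) ∧ avgPhi S₁ x z = 0) ∧
      (Function.Periodic (fun y => S₂ x y z) (2*π) ∧ avgPhi S₂ x z = 0) ∧
      (Function.Periodic (fun y => S₃ x y z) (2*π) ∧ avgPhi S₃ x z = 0) ∧
      (Function.Periodic (fun y => S₄ x y z) (2*π) ∧ avgPhi S₄ x z = 0)) ∧
  (∀ x ∈ DI, ∀ y : ℝ, ∀ z ∈ Dτ, z ≠ τs →
      ω z * pdPhi S₁ x y z + tilde H₁ x y z = 0 ∧
      ω z * pdPhi S₂ x y z + pdI H₁ x y z * pdPhi S₁ x y z + pdTau S₁ x y z = R₂ x z ∧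
      ω z * pdPhi S₃ x y z + (1/2) * pdIn 2 H₁ x y z * (pdPhi S₁ x y z)^2
        + pdI H₁ x y z * pdPhi S₂ x y z + pdTau S₂ x y z = R₃ x z ∧
      ω z * pdPhi S₄ x y z + (1/6) * pdIn 3 H₁ x y z * (pdPhi S₁ x y z)^3
        + pdIn 2 H₁ x y z * pdPhi S₁ x y z * pdPhi S₂ x y z
        + pdI H₁ x y z * pdPhi S₃ x y z + pdTau S₃ x y z = R₄ x z) ∧
  (∀ x ∈ DI, ∀ z ∈ Dτ, z ≠ τs →
      R₂ x z = avgPhi (fun a b c => pdI H₁ a b c * pdPhi S₁ a b c) x z ∧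
      R₃ x z = avgPhi (fun a b c => (1/2) * pdIn 2 H₁ a b c * (pdPhi S₁ a b c)^2
        + pdI H₁ a b c * pdPhi S₂ a b c) x z ∧
      R₄ x z = avgPhi (fun a b c => (1/6) * pdIn 3 H₁ a b c * (pdPhi S₁ a b c)^3
        + pdIn 2 H₁ a b c * pdPhi S₁ a b c * pdPhi S₂ a b c
        + pdI H₁ a b c * pdPhi S₃ a b c) x z)

/-- The full generating function S = S₁ + ε S₂ + ε² S₃ + ε³ S₄. -/
def Stot (S₁ S₂ S₃ S₄ : ℝ → ℝ → ℝ → ℝ) (ε : ℝ) (x y z : ℝ) : ℝ :=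
  S₁ x y z + ε * S₂ x y z + ε^2 * S₃ x y z + ε^3 * S₄ x y z

/-- Linearized frequency Ω(τ) = ω'_*·(τ − τ_*). -/
def Omeg (ω : ℝ → ℝ) (τs z : ℝ) : ℝ := deriv ω τs * (z - τs)

def Sa1 (H₁ : ℝ → ℝ → ℝ → ℝ) (ω : ℝ → ℝ) (τs Istar : ℝ) (y z : ℝ) : ℝ :=
  -(hatIter (tilde H₁) 1 Istar y τs) / Omeg ω τs z

def Sa2 (H₁ : ℝ → ℝ → ℝ → ℝ) (ω : ℝ → ℝ) (τs Istar : ℝ) (y z : ℝ) : ℝ :=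
  -(deriv ω τs * hatIter (tilde H₁) 2 Istar y τs) / (Omeg ω τs z)^3

def Sa3 (H₁ : ℝ → ℝ → ℝ → ℝ) (ω : ℝ → ℝ) (τs Istar : ℝ) (y z : ℝ) : ℝ :=
  -(3 * (deriv ω τs)^2 * hatIter (tilde H₁) 3 Istar y τs) / (Omeg ω τs z)^5

def Sa4 (H₁ : ℝ → ℝ → ℝ → ℝ) (ω : ℝ → ℝ) (τs Istar : ℝ) (y z : ℝ) : ℝ :=
  -(15 * (deriv ω τs)^3 * hatIter (tilde H₁) 4 Istar y τs) / (Omeg ω τs z)^7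

/-!
The generating functions separate the variables: `S^a_{k+1}(φ, τ) = b_k(τ) · H̃₁^{(k+1)}(φ)`. Since
each iterated hat function is the `φ`-derivative of the next one, the homological equations reduce
to the recursion `Ω · b₀ = -1`, `b_k' = -Ω · b_{k+1}`, solved by
`b_k = -(2k-1)‼ · ω'_*^k / Ω^(2k+1)`. Differentiating the homological equations once more in `φ`,
the `φ`-part of `d/dt (ε^(k+1) · ∂S^a_{k+2}/∂φ)` along the flow cancels the `τ`-part of
`d/dt (ε^k · ∂S^a_{k+1}/∂φ)`, so the sum defining `J_a` telescopes and only the last `τ`-derivative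
survives.
-/

section Hat

variable {g : ℝ → ℝ → ℝ → ℝ} {x z : ℝ}

/-- The angular slice `φ ↦ g x φ z` is continuous, `2π`-periodic and has zero mean: the class of
functions that the hat operator maps to itself. -/
structure IsOscillating (g : ℝ → ℝ → ℝ → ℝ) (x z : ℝ) : Prop where
  continuous : Continuous fun y => g x y z
  periodic : Function.Periodic (fun y => g x y z) (2 * π)
  avgPhi_eq_zero : avgPhi g x z = 0

lemma avgPhi_tilde (hg : Continuous fun y => g x y z) : avgPhi (tilde g) x z = 0 := by
  have integral_avg : ∫ _ in (0 : ℝ)..2 * π, avgPhi g x z = ∫ y in (0 : ℝ)..2 * π, g x y z := by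
    rw [intervalIntegral.integral_const, smul_eq_mul, avgPhi]
    field_simp
    ring
  simp only [avgPhi, tilde] at integral_avg ⊢
  rw [intervalIntegral.integral_sub (hg.intervalIntegrable _ _) intervalIntegrable_const,
    integral_avg, sub_self, mul_zero]

lemma isOscillating_tilde (hg : Continuous fun y => g x y z)
    (hper : Function.Periodic (fun y => g x y z) (2 * π)) : IsOscillating (tilde g) x z where
  continuous := hg.sub continuous_const
  periodic y := congrArg (· - avgPhi g x z) (hper y)
  avgPhi_eq_zero := avgPhi_tilde hg

lemma hat_eq_tilde (g : ℝ → ℝ → ℝ → ℝ) :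
    hat g = tilde fun x y z => ∫ ψ in (0 : ℝ)..y, g x ψ z :=
  rfl

lemma hasDerivAt_hat (hg : Continuous fun y => g x y z) (y : ℝ) :
    HasDerivAt (fun y => hat g x y z) (g x y z) y :=
  (hg.integral_hasStrictDerivAt 0 y).hasDerivAt.sub_const _

lemma periodic_integral_of_integral_eq_zero {f : ℝ → ℝ} {T : ℝ} (hf : Continuous f)
    (hper : Function.Periodic f T) (hzero : ∫ y in (0 : ℝ)..T, f y = 0) :
    Function.Periodic (fun y => ∫ ψ in (0 : ℝ)..y, f ψ) T := fun y => by
  have hadd := hper.intervalIntegral_add_eq_add 0 y fun _ _ => hf.intervalIntegrable _ _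
  rwa [zero_add, hzero, add_zero] at hadd

namespace IsOscillating

lemma integral_eq_zero (hg : IsOscillating g x z) : ∫ y in (0 : ℝ)..2 * π, g x y z = 0 :=
  (mul_eq_zero.1 hg.avgPhi_eq_zero).resolve_left (by positivity)

lemma hat (hg : IsOscillating g x z) : IsOscillating (hat g) x z := by
  rw [hat_eq_tilde]
  exact isOscillating_tilde
    (intervalIntegral.continuous_primitive (fun _ _ => hg.continuous.intervalIntegrable _ _) 0)
    (periodic_integral_of_integral_eq_zero hg.continuous hg.periodic hg.integral_eq_zero)

lemma hatIter (hg : IsOscillating g x z) : ∀ n, IsOscillating (hatIter g n) x z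
  | 0 => hg
  | n + 1 => (hg.hatIter n).hat

lemma hasDerivAt_hatIter_succ (hg : IsOscillating g x z) (n : ℕ) (y : ℝ) :
    HasDerivAt (fun y => _root_.hatIter g (n + 1) x y z) (_root_.hatIter g n x y z) y :=
  hasDerivAt_hat (hg.hatIter n).continuous y

lemma pdPhi_hatIter_succ (hg : IsOscillating g x z) (n : ℕ) (y : ℝ) :
    pdPhi (_root_.hatIter g (n + 1)) x y z = _root_.hatIter g n x y z :=
  (hg.hasDerivAt_hatIter_succ n y).deriv

end IsOscillating

lemma pdPhi_tilde (g : ℝ → ℝ → ℝ → ℝ) : pdPhi (tilde g) = pdPhi g := by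
  ext x y z
  exact deriv_sub_const _

lemma differentiable_hatIter_tilde (hosc : IsOscillating (tilde g) x z)
    (hg : Differentiable ℝ fun y => g x y z) :
    ∀ n, Differentiable ℝ fun y => hatIter (tilde g) n x y z
  | 0 => hg.sub_const _
  | n + 1 => fun y => (hosc.hasDerivAt_hatIter_succ n y).differentiableAt

end Hat

section SlowCoeff

variable {ω : ℝ → ℝ} {τs z : ℝ}

/-- The `τ`-dependent factor `-(2k-1)‼ · ω'_*^k / Ω(τ)^(2k+1)` of the generating function
`S^a_{k+1}`. At `k = 0` truncated subtraction gives `0‼ = 1`, which agrees with the convention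
`(-1)‼ = 1`. -/
def slowCoeff (ω : ℝ → ℝ) (τs : ℝ) (k : ℕ) (z : ℝ) : ℝ :=
  -(((2 * k - 1).doubleFactorial : ℝ) * deriv ω τs ^ k) / Omeg ω τs z ^ (2 * k + 1)

lemma Omeg_ne_zero (hω : deriv ω τs ≠ 0) (hz : z ≠ τs) : Omeg ω τs z ≠ 0 :=
  mul_ne_zero hω (sub_ne_zero.2 hz)

lemma hasDerivAt_Omeg (ω : ℝ → ℝ) (τs z : ℝ) : HasDerivAt (Omeg ω τs) (deriv ω τs) z :=
  (((hasDerivAt_id z).sub_const τs).const_mul (deriv ω τs)).congr_deriv (mul_one _)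

lemma Omeg_mul_slowCoeff_zero (hω : deriv ω τs ≠ 0) (hz : z ≠ τs) :
    Omeg ω τs z * slowCoeff ω τs 0 z = -1 := by
  simp [slowCoeff, mul_div_cancel₀, Omeg_ne_zero hω hz]

lemma neg_Omeg_mul_slowCoeff_succ (hω : deriv ω τs ≠ 0) (hz : z ≠ τs) (k : ℕ) :
    -(Omeg ω τs z * slowCoeff ω τs (k + 1) z) =
      ((2 * k + 1).doubleFactorial : ℝ) * deriv ω τs ^ (k + 1) / Omeg ω τs z ^ (2 * k + 2) := by
  have hΩ := Omeg_ne_zero hω hz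
  rw [slowCoeff, show 2 * (k + 1) - 1 = 2 * k + 1 by lia]
  field_simp
  ring

lemma hasDerivAt_slowCoeff (hω : deriv ω τs ≠ 0) (hz : z ≠ τs) (k : ℕ) :
    HasDerivAt (slowCoeff ω τs k) (-(Omeg ω τs z * slowCoeff ω τs (k + 1) z)) z := by
  have hΩ := Omeg_ne_zero hω hz
  refine ((hasDerivAt_const z _).fun_div ((hasDerivAt_Omeg ω τs z).fun_pow (2 * k + 1))
    (pow_ne_zero _ hΩ)).congr_deriv ?_
  rw [neg_Omeg_mul_slowCoeff_succ hω hz, Nat.doubleFactorial_add_one]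
  push_cast [Nat.add_sub_cancel]
  field_simp
  ring

end SlowCoeff

section Generator

variable {H₁ : ℝ → ℝ → ℝ → ℝ} {ω : ℝ → ℝ} {τs Istar : ℝ}

/-- The generating function `S^a_{k+1}` of the approximate system, for every order `k`. The index
is shifted: `approxGenerator H₁ ω τs Istar k` is `S^a_{k+1}`. -/
def approxGenerator (H₁ : ℝ → ℝ → ℝ → ℝ) (ω : ℝ → ℝ) (τs Istar : ℝ) (k : ℕ) (y z : ℝ) : ℝ :=
  slowCoeff ω τs k z * hatIter (tilde H₁) (k + 1) Istar y τs

lemma Sa1_eq_approxGenerator (H₁ : ℝ → ℝ → ℝ → ℝ) (ω : ℝ → ℝ) (τs Istar : ℝ) :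
    Sa1 H₁ ω τs Istar = approxGenerator H₁ ω τs Istar 0 := by
  ext y z
  simp only [Sa1, approxGenerator, slowCoeff, show (2 * 0 - 1).doubleFactorial = 1 from rfl]
  push_cast
  ring

lemma Sa2_eq_approxGenerator (H₁ : ℝ → ℝ → ℝ → ℝ) (ω : ℝ → ℝ) (τs Istar : ℝ) :
    Sa2 H₁ ω τs Istar = approxGenerator H₁ ω τs Istar 1 := by
  ext y z
  simp only [Sa2, approxGenerator, slowCoeff, show (2 * 1 - 1).doubleFactorial = 1 from rfl]
  push_cast
  ring

lemma Sa3_eq_approxGenerator (H₁ : ℝ → ℝ → ℝ → ℝ) (ω : ℝ → ℝ) (τs Istar : ℝ) :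
    Sa3 H₁ ω τs Istar = approxGenerator H₁ ω τs Istar 2 := by
  ext y z
  simp only [Sa3, approxGenerator, slowCoeff, show (2 * 2 - 1).doubleFactorial = 3 from rfl]
  push_cast
  ring

lemma Sa4_eq_approxGenerator (H₁ : ℝ → ℝ → ℝ → ℝ) (ω : ℝ → ℝ) (τs Istar : ℝ) :
    Sa4 H₁ ω τs Istar = approxGenerator H₁ ω τs Istar 3 := by
  ext y z
  simp only [Sa4, approxGenerator, slowCoeff, show (2 * 3 - 1).doubleFactorial = 15 from rfl]
  push_cast
  ring

lemma pdz_approxGenerator (hω : deriv ω τs ≠ 0) {z : ℝ} (hz : z ≠ τs) (k : ℕ) (y : ℝ) :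
    pdz (approxGenerator H₁ ω τs Istar k) y z =
      -(Omeg ω τs z * slowCoeff ω τs (k + 1) z) * hatIter (tilde H₁) (k + 1) Istar y τs :=
  ((hasDerivAt_slowCoeff hω hz k).mul_const _).deriv

lemma periodic_approxGenerator (hosc : IsOscillating (tilde H₁) Istar τs) (k : ℕ) (z : ℝ) :
    Function.Periodic (fun y => approxGenerator H₁ ω τs Istar k y z) (2 * π) := fun y =>
  congrArg (slowCoeff ω τs k z * ·) ((hosc.hatIter (k + 1)).periodic y)

lemma integral_approxGenerator (hosc : IsOscillating (tilde H₁) Istar τs) (k : ℕ) (z : ℝ) :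
    ∫ y in (0 : ℝ)..2 * π, approxGenerator H₁ ω τs Istar k y z = 0 := by
  simp only [approxGenerator, intervalIntegral.integral_const_mul,
    (hosc.hatIter (k + 1)).integral_eq_zero, mul_zero]

lemma pdy_approxGenerator (hosc : IsOscillating (tilde H₁) Istar τs) (k : ℕ) :
    pdy (approxGenerator H₁ ω τs Istar k) =
      fun y z => slowCoeff ω τs k z * hatIter (tilde H₁) k Istar y τs := by
  ext y z
  exact ((hosc.hasDerivAt_hatIter_succ k y).const_mul _).deriv

lemma pdy_pdy_approxGenerator (hosc : IsOscillating (tilde H₁) Istar τs) (k : ℕ) (y z : ℝ) :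
    pdy (pdy (approxGenerator H₁ ω τs Istar k)) y z =
      slowCoeff ω τs k z * pdPhi (hatIter (tilde H₁) k) Istar y τs := by
  rw [pdy_approxGenerator hosc]
  exact deriv_const_mul_field _

lemma pdz_pdy_approxGenerator (hosc : IsOscillating (tilde H₁) Istar τs)
    (hω : deriv ω τs ≠ 0) {z : ℝ} (hz : z ≠ τs) (k : ℕ) (y : ℝ) :
    pdz (pdy (approxGenerator H₁ ω τs Istar k)) y z =
      -(Omeg ω τs z * slowCoeff ω τs (k + 1) z) * hatIter (tilde H₁) k Istar y τs := by
  rw [pdy_approxGenerator hosc]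
  exact ((hasDerivAt_slowCoeff hω hz k).mul_const _).deriv

lemma Omeg_mul_pdy_approxGenerator_zero (hosc : IsOscillating (tilde H₁) Istar τs)
    (hω : deriv ω τs ≠ 0) {z : ℝ} (hz : z ≠ τs) (y : ℝ) :
    Omeg ω τs z * pdy (approxGenerator H₁ ω τs Istar 0) y z + tilde H₁ Istar y τs = 0 := by
  simp only [pdy_approxGenerator hosc, ← mul_assoc, Omeg_mul_slowCoeff_zero hω hz, hatIter]
  ring

lemma Omeg_mul_pdy_approxGenerator_succ (hosc : IsOscillating (tilde H₁) Istar τs)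
    (hω : deriv ω τs ≠ 0) {z : ℝ} (hz : z ≠ τs) (k : ℕ) (y : ℝ) :
    Omeg ω τs z * pdy (approxGenerator H₁ ω τs Istar (k + 1)) y z +
      pdz (approxGenerator H₁ ω τs Istar k) y z = 0 := by
  rw [pdz_approxGenerator hω hz, pdy_approxGenerator hosc]
  ring

lemma Omeg_mul_pdy_pdy_approxGenerator_zero (hosc : IsOscillating (tilde H₁) Istar τs)
    (hω : deriv ω τs ≠ 0) {z : ℝ} (hz : z ≠ τs) (y : ℝ) :
    Omeg ω τs z * pdy (pdy (approxGenerator H₁ ω τs Istar 0)) y z = -pdPhi H₁ Istar y τs := by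
  rw [pdy_pdy_approxGenerator hosc, ← mul_assoc, Omeg_mul_slowCoeff_zero hω hz, neg_one_mul,
    hatIter, pdPhi_tilde]

lemma Omeg_mul_pdy_pdy_approxGenerator_succ (hosc : IsOscillating (tilde H₁) Istar τs)
    (hω : deriv ω τs ≠ 0) {z : ℝ} (hz : z ≠ τs) (k : ℕ) (y : ℝ) :
    Omeg ω τs z * pdy (pdy (approxGenerator H₁ ω τs Istar (k + 1))) y z =
      -pdz (pdy (approxGenerator H₁ ω τs Istar k)) y z := by
  rw [pdz_pdy_approxGenerator hosc hω hz, pdy_pdy_approxGenerator hosc,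
    hosc.pdPhi_hatIter_succ]
  ring

end Generator

section Flow

variable {H₁ : ℝ → ℝ → ℝ → ℝ} {ω : ℝ → ℝ} {τs Istar ε t : ℝ} {φ : ℝ → ℝ}

lemma hasDerivAt_pdy_approxGenerator_flow (hω : deriv ω τs ≠ 0)
    (hosc : IsOscillating (tilde H₁) Istar τs) (hH₁ : Differentiable ℝ fun y => H₁ Istar y τs)
    (ht : ε * t ≠ τs) (hφ : HasDerivAt φ (Omeg ω τs (ε * t)) t) (k : ℕ) :
    HasDerivAt (fun s => pdy (approxGenerator H₁ ω τs Istar k) (φ s) (ε * s))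
      (Omeg ω τs (ε * t) * pdy (pdy (approxGenerator H₁ ω τs Istar k)) (φ t) (ε * t) +
        ε * pdz (pdy (approxGenerator H₁ ω τs Istar k)) (φ t) (ε * t)) t := by
  have hslow := (hasDerivAt_slowCoeff hω ht k).comp t (hasDerivAt_const_mul ε)
  have hfast := (differentiable_hatIter_tilde hosc hH₁ k (φ t)).hasDerivAt.comp t hφ
  rw [pdz_pdy_approxGenerator hosc hω ht, pdy_pdy_approxGenerator hosc, pdy_approxGenerator hosc]
  refine (hslow.mul hfast).congr_deriv ?_
  simp only [Function.comp_apply, pdPhi]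
  ring

lemma hasDerivAt_sum_pdy_approxGenerator_flow (hω : deriv ω τs ≠ 0)
    (hosc : IsOscillating (tilde H₁) Istar τs) (hH₁ : Differentiable ℝ fun y => H₁ Istar y τs)
    (ht : ε * t ≠ τs) (hφ : HasDerivAt φ (Omeg ω τs (ε * t)) t) (n : ℕ) :
    HasDerivAt
      (fun s => ∑ k ∈ Finset.range (n + 1),
        ε ^ k * pdy (approxGenerator H₁ ω τs Istar k) (φ s) (ε * s))
      (-pdPhi H₁ Istar (φ t) τs +
        ε ^ (n + 1) * pdz (pdy (approxGenerator H₁ ω τs Istar n)) (φ t) (ε * t)) t := by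
  induction n with
  | zero =>
    simpa [Omeg_mul_pdy_pdy_approxGenerator_zero hosc hω ht] using
      hasDerivAt_pdy_approxGenerator_flow hω hosc hH₁ ht hφ 0
  | succ n ih =>
    have hnext := (hasDerivAt_pdy_approxGenerator_flow hω hosc hH₁ ht hφ (n + 1)).const_mul
      (ε ^ (n + 1))
    rw [Omeg_mul_pdy_pdy_approxGenerator_succ hosc hω ht] at hnext
    simp only [Finset.sum_range_succ _ (n + 1)]
    exact (ih.fun_add hnext).congr_deriv (by ring)

lemma hasDerivAt_sub_sum_pdy_approxGenerator_flow {Ia : ℝ → ℝ} (hω : deriv ω τs ≠ 0)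
    (hosc : IsOscillating (tilde H₁) Istar τs) (hH₁ : Differentiable ℝ fun y => H₁ Istar y τs)
    (ht : ε * t ≠ τs) (hφ : HasDerivAt φ (Omeg ω τs (ε * t)) t)
    (hIa : HasDerivAt Ia (-(ε * pdPhi H₁ Istar (φ t) τs)) t) (n : ℕ) :
    HasDerivAt
      (fun s => Ia s - ε * ∑ k ∈ Finset.range (n + 1),
        ε ^ k * pdy (approxGenerator H₁ ω τs Istar k) (φ s) (ε * s))
      (-(ε ^ (n + 2) * pdz (pdy (approxGenerator H₁ ω τs Istar n)) (φ t) (ε * t))) t :=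
  (hIa.fun_sub ((hasDerivAt_sum_pdy_approxGenerator_flow hω hosc hH₁ ht hφ n).const_mul
    ε)).congr_deriv (by ring)

lemma hasDerivAt_approxAngle (ω : ℝ → ℝ) (τs φstar t : ℝ) (hε : ε ≠ 0) :
    HasDerivAt (fun s => φstar + deriv ω τs * (ε * s - τs) ^ 2 / (2 * ε))
      (Omeg ω τs (ε * t)) t := by
  have hshift : HasDerivAt (fun s => ε * s - τs) ε t := (hasDerivAt_const_mul ε).sub_const τs
  refine ((((hshift.fun_pow 2).const_mul (deriv ω τs)).div_const (2 * ε)).const_add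
    φstar).congr_deriv ?_
  rw [Omeg]
  push_cast
  field_simp

end Flow

lemma differentiable_angular_slice {H₁ : ℝ → ℝ → ℝ → ℝ} {DI Dτ : Set ℝ} {x z : ℝ}
    (hH₁ : DifferentiableOn ℝ (fun p : ℝ × ℝ × ℝ => H₁ p.1 p.2.1 p.2.2)
      (DI ×ˢ (univ : Set ℝ) ×ˢ Dτ)) (hx : x ∈ DI) (hz : z ∈ Dτ) :
    Differentiable ℝ fun y => H₁ x y z :=
  differentiableOn_univ.1 <| hH₁.comp (g := fun p : ℝ × ℝ × ℝ => H₁ p.1 p.2.1 p.2.2)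
    (f := fun y => (x, y, z)) (by fun_prop) fun _ _ => ⟨hx, mem_univ _, hz⟩

theorem approx_normal_form_general {H₁ : ℝ → ℝ → ℝ → ℝ} {ω : ℝ → ℝ} {τs Istar : ℝ}
    (hω : deriv ω τs ≠ 0) (hH₁ : Differentiable ℝ fun y => H₁ Istar y τs)
    (hper : Function.Periodic (fun y => H₁ Istar y τs) (2 * π)) :
    (∀ k, ∀ z ≠ τs,
      Function.Periodic (fun y => approxGenerator H₁ ω τs Istar k y z) (2 * π) ∧
        1 / (2 * π) * ∫ y in (0 : ℝ)..2 * π, approxGenerator H₁ ω τs Istar k y z = 0) ∧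
    (∀ y, ∀ z ≠ τs,
      Omeg ω τs z * pdy (approxGenerator H₁ ω τs Istar 0) y z + tilde H₁ Istar y τs = 0 ∧
      ∀ k, Omeg ω τs z * pdy (approxGenerator H₁ ω τs Istar (k + 1)) y z +
        pdz (approxGenerator H₁ ω τs Istar k) y z = 0) ∧
    ∀ (ε t : ℝ) (Ia φ : ℝ → ℝ), ε * t ≠ τs →
      HasDerivAt Ia (-(ε * pdPhi H₁ Istar (φ t) τs)) t →
      HasDerivAt φ (Omeg ω τs (ε * t)) t →
      ∀ n, HasDerivAt
          (fun s => Ia s - ε * ∑ k ∈ Finset.range (n + 1),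
            ε ^ k * pdy (approxGenerator H₁ ω τs Istar k) (φ s) (ε * s))
          (-(ε ^ (n + 2) * pdz (pdy (approxGenerator H₁ ω τs Istar n)) (φ t) (ε * t))) t ∧
        -(ε ^ (n + 2) * pdz (pdy (approxGenerator H₁ ω τs Istar n)) (φ t) (ε * t)) =
          -((2 * n + 1).doubleFactorial * ε ^ (n + 2) * deriv ω τs ^ (n + 1) *
            hatIter (tilde H₁) n Istar (φ t) τs / Omeg ω τs (ε * t) ^ (2 * n + 2)) := by
  have hosc : IsOscillating (tilde H₁) Istar τs := isOscillating_tilde hH₁.continuous hper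
  refine ⟨fun k z _ => ⟨periodic_approxGenerator hosc k z, ?_⟩,
    fun y z hz => ⟨Omeg_mul_pdy_approxGenerator_zero hosc hω hz y,
      fun k => Omeg_mul_pdy_approxGenerator_succ hosc hω hz k y⟩,
    fun ε t Ia φ ht hIa hφ n =>
      ⟨hasDerivAt_sub_sum_pdy_approxGenerator_flow hω hosc hH₁ ht hφ hIa n, ?_⟩⟩
  · rw [integral_approxGenerator hosc, mul_zero]
  · rw [pdz_pdy_approxGenerator hosc hω ht, neg_Omeg_mul_slowCoeff_succ hω ht]
    ring

/-- Normal form for the approximate (frozen) system. -/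
theorem approx_normal_form
    (DI Dτ : Set ℝ) (hDIo : IsOpen DI) (hDIc : DI.OrdConnected)
    (hDτo : IsOpen Dτ) (hDτc : Dτ.OrdConnected)
    (ω : ℝ → ℝ) (H₁ : ℝ → ℝ → ℝ → ℝ)
    (hω : ContDiffOn ℝ 4 ω Dτ)
    (hH₁ : ContDiffOn ℝ 4 (fun p : ℝ × ℝ × ℝ => H₁ p.1 p.2.1 p.2.2)
      (DI ×ˢ (univ : Set ℝ) ×ˢ Dτ))
    (hper : ∀ x z, Function.Periodic (fun y => H₁ x y z) (2*π))
    (τs : ℝ) (hτs : τs ∈ Dτ) (hωz : ω τs = 0) (hω' : 0 < deriv ω τs)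
    (hωne : ∀ τ ∈ Dτ, τ ≠ τs → ω τ ≠ 0)
    (Istar : ℝ) (hIstar : Istar ∈ DI) (φstar : ℝ) :
    (∀ z : ℝ, z ≠ τs →
        (Function.Periodic (fun y => Sa1 H₁ ω τs Istar y z) (2*π) ∧
          (1/(2*π)) * (∫ y in (0:ℝ)..(2*π), Sa1 H₁ ω τs Istar y z) = 0) ∧
        (Function.Periodic (fun y => Sa2 H₁ ω τs Istar y z) (2*π) ∧
          (1/(2*π)) * (∫ y in (0:ℝ)..(2*π), Sa2 H₁ ω τs Istar y z) = 0) ∧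
        (Function.Periodic (fun y => Sa3 H₁ ω τs Istar y z) (2*π) ∧
          (1/(2*π)) * (∫ y in (0:ℝ)..(2*π), Sa3 H₁ ω τs Istar y z) = 0) ∧
        (Function.Periodic (fun y => Sa4 H₁ ω τs Istar y z) (2*π) ∧
          (1/(2*π)) * (∫ y in (0:ℝ)..(2*π), Sa4 H₁ ω τs Istar y z) = 0)) ∧
    (∀ y z : ℝ, z ≠ τs →
        Omeg ω τs z * pdy (Sa1 H₁ ω τs Istar) y z + tilde H₁ Istar y τs = 0 ∧
        Omeg ω τs z * pdy (Sa2 H₁ ω τs Istar) y z + pdz (Sa1 H₁ ω τs Istar) y z = 0 ∧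
        Omeg ω τs z * pdy (Sa3 H₁ ω τs Istar) y z + pdz (Sa2 H₁ ω τs Istar) y z = 0 ∧
        Omeg ω τs z * pdy (Sa4 H₁ ω τs Istar) y z + pdz (Sa3 H₁ ω τs Istar) y z = 0) ∧
    (∀ ε : ℝ, 0 < ε → ∀ Ia : ℝ → ℝ,
        (∀ s : ℝ, HasDerivAt Ia
          (-(ε * pdPhi H₁ Istar (φstar + deriv ω τs * (ε*s - τs)^2/(2*ε)) τs)) s) →
        ∀ t : ℝ, ε*t ≠ τs →
          HasDerivAt (fun s : ℝ => Ia s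
              - ε * (pdy (Sa1 H₁ ω τs Istar)
                        (φstar + deriv ω τs * (ε*s - τs)^2/(2*ε)) (ε*s)
                + ε * pdy (Sa2 H₁ ω τs Istar)
                        (φstar + deriv ω τs * (ε*s - τs)^2/(2*ε)) (ε*s)
                + ε^2 * pdy (Sa3 H₁ ω τs Istar)
                        (φstar + deriv ω τs * (ε*s - τs)^2/(2*ε)) (ε*s)
                + ε^3 * pdy (Sa4 H₁ ω τs Istar)
                        (φstar + deriv ω τs * (ε*s - τs)^2/(2*ε)) (ε*s)))
            (-(ε^5 * pdz (pdy (Sa4 H₁ ω τs Istar))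
                (φstar + deriv ω τs * (ε*t - τs)^2/(2*ε)) (ε*t))) t ∧
          -(ε^5 * pdz (pdy (Sa4 H₁ ω τs Istar))
              (φstar + deriv ω τs * (ε*t - τs)^2/(2*ε)) (ε*t))
            = -(105 * ε^5 * (deriv ω τs)^4
                * hatIter (tilde H₁) 3 Istar
                    (φstar + deriv ω τs * (ε*t - τs)^2/(2*ε)) τs
                / (Omeg ω τs (ε*t))^8)) := by
  obtain ⟨hS, hhom, hJ⟩ := approx_normal_form_general hω'.ne'
    (differentiable_angular_slice (hH₁.differentiableOn (by norm_num)) hIstar hτs) (hper Istar τs)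
  simp only [Sa1_eq_approxGenerator, Sa2_eq_approxGenerator, Sa3_eq_approxGenerator,
    Sa4_eq_approxGenerator]
  exact ⟨fun z hz => ⟨hS 0 z hz, hS 1 z hz, hS 2 z hz, hS 3 z hz⟩,
    fun y z hz => ⟨(hhom y z hz).1, (hhom y z hz).2 0, (hhom y z hz).2 1, (hhom y z hz).2 2⟩,
    fun ε hε Ia hIa t ht => by
      simpa [Finset.sum_range_succ, Nat.doubleFactorial] using
        hJ ε t Ia _ ht (hIa t) (hasDerivAt_approxAngle ω τs φstar t hε.ne') 3⟩
end
end

section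
/- Lemma 5 (estimate of singular integrals outside the resonance zone): let a ∈ ℝ, let c ≥ 2 be an integer, and let f₀ : D → ℝ be continuous. There exist C, ε₀ > 0 depending only on H, f₀, K, τ_-, τ_+ such that for all 0 < ε < ε₀, every solution as in the setup, and every t ∈ [t_-, t_l]: |∫_{t_l}^{t} ε^a·f₀(I(t₁), φ(t₁), εt₁)/ω(εt₁)^c dt₁| ≤ C·ε^{a − (c+1)/2}. The same estimate holds with t_l replaced by t_r and t ∈ [t_r, t_+], and with ω replaced by Ω(τ) := ω'_*·(τ − τ_*). -/
open Real Set Filter Topology MeasureTheory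

noncomputable section

/-!
Since `ω` has a simple zero at `τs` and no other zero, its divided difference at `τs` is continuous
and nowhere zero on `[τm, τp]`, so `|ω τ| ≥ m |τ - τs|` there for some `m > 0`. As `f₀` is bounded
along the trajectory, the integrand is `O(ε ^ a |ε t - τs| ^ (-c))`. In the slow time `τ = ε t` this
is integrated outwards, starting at distance `√ε` from the pole, which gives
`ε ^ a · ε⁻¹ · (√ε) ^ (1 - c) = ε ^ (a - (c + 1) / 2)`.
-/

lemma exists_pos_forall_mul_norm_sub_le_norm_of_deriv_ne_zero
    {𝕜 E : Type*} [NontriviallyNormedField 𝕜] [NormedAddCommGroup E] [NormedSpace 𝕜 E]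
    {f : 𝕜 → E} {s : Set 𝕜} {x₀ : 𝕜} (hs : IsCompact s) (hx₀ : s ∈ 𝓝 x₀) (hf : ContinuousOn f s)
    (hzero : f x₀ = 0) (hderiv : deriv f x₀ ≠ 0) (hne : ∀ x ∈ s, x ≠ x₀ → f x ≠ 0) :
    ∃ m > 0, ∀ x ∈ s, m * ‖x - x₀‖ ≤ ‖f x‖ := by
  have hcont : ContinuousOn (dslope f x₀) s :=
    (continuousOn_dslope hx₀).2 ⟨hf, differentiableAt_of_deriv_ne_zero hderiv⟩
  have hfactor (x : 𝕜) : (x - x₀) • dslope f x₀ x = f x := sub_smul_dslope_of_zero hzero x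
  have hpos (x : 𝕜) (hx : x ∈ s) : 0 < ‖dslope f x₀ x‖ := by
    rw [norm_pos_iff]
    rcases eq_or_ne x x₀ with rfl | hxne
    · rwa [dslope_same]
    · exact right_ne_zero_of_smul (hfactor x ▸ hne x hx hxne)
  obtain ⟨m, hm, hle⟩ := hs.exists_forall_le' hcont.norm hpos
  refine ⟨m, hm, fun x hx ↦ ?_⟩
  rw [← hfactor x, norm_smul, mul_comm]
  gcongr
  exact hle x hx

lemma integral_zpow_neg_le_zpow_one_sub {δ x : ℝ} {c : ℤ} (hc : 2 ≤ c) (hδ : 0 < δ) (hx : δ ≤ x) :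
    ∫ s in δ..x, s ^ (-c) ≤ δ ^ (1 - c) := by
  have hzero : (0 : ℝ) ∉ uIcc δ x := by
    rw [uIcc_of_le hx]
    exact fun h ↦ hδ.not_ge h.1
  have hc' : (1 : ℝ) ≤ c - 1 := by
    have : (2 : ℝ) ≤ c := by exact_mod_cast hc
    linarith
  have hδc : 0 ≤ δ ^ (1 - c) := (zpow_pos hδ _).le
  have hxc : 0 ≤ x ^ (1 - c) := (zpow_pos (hδ.trans_le hx) _).le
  calc ∫ s in δ..x, s ^ (-c) = (x ^ (1 - c) - δ ^ (1 - c)) / (1 - c) := by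
        rw [integral_zpow (Or.inr ⟨by lia, hzero⟩), neg_add_eq_sub]
        push_cast
        rw [neg_add_eq_sub]
    _ = (δ ^ (1 - c) - x ^ (1 - c)) / (c - 1) := by
        rw [← neg_sub, ← neg_sub (c : ℝ), neg_div_neg_eq]
    _ ≤ δ ^ (1 - c) := div_le_of_le_mul₀ (by linarith) hδc (by nlinarith)

lemma norm_integral_le_of_norm_le_mul_zpow_neg {E : Type*} [NormedAddCommGroup E] [NormedSpace ℝ E]
    {g : ℝ → E} {B p δ ε t : ℝ} {c : ℤ} (hc : 2 ≤ c) (hδ : 0 < δ) (hε : 0 < ε)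
    (ht : (p + δ) / ε ≤ t) (hg : ∀ s ∈ Icc ((p + δ) / ε) t, ‖g s‖ ≤ B * (ε * s - p) ^ (-c)) :
    ‖∫ s in ((p + δ) / ε)..t, g s‖ ≤ B * (ε⁻¹ * δ ^ (1 - c)) := by
  have hpole {s : ℝ} (hs : (p + δ) / ε ≤ s) : δ ≤ ε * s - p := by
    have := (div_le_iff₀' hε).1 hs
    linarith
  have hB : 0 ≤ B := nonneg_of_mul_nonneg_left
    ((norm_nonneg _).trans (hg t ⟨ht, le_rfl⟩)) (zpow_pos (hδ.trans_le (hpole ht)) _)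
  have hint : IntervalIntegrable (fun s ↦ B * (ε * s - p) ^ (-c)) volume ((p + δ) / ε) t := by
    refine ContinuousOn.intervalIntegrable (continuousOn_const.mul ?_)
    refine ContinuousOn.zpow₀ (by fun_prop) _ fun s hs ↦ Or.inl ?_
    rw [uIcc_of_le ht] at hs
    exact (hδ.trans_le (hpole hs.1)).ne'
  calc ‖∫ s in ((p + δ) / ε)..t, g s‖
      ≤ ∫ s in ((p + δ) / ε)..t, B * (ε * s - p) ^ (-c) :=
        intervalIntegral.norm_integral_le_of_norm_le ht
          (.of_forall fun s hs ↦ hg s (Ioc_subset_Icc_self hs)) hint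
    _ = B * (ε⁻¹ * ∫ τ in δ..(ε * t - p), τ ^ (-c)) := by
        rw [intervalIntegral.integral_const_mul,
          intervalIntegral.integral_comp_mul_sub (fun τ ↦ τ ^ (-c)) hε.ne',
          mul_div_cancel₀ _ hε.ne', add_sub_cancel_left, smul_eq_mul]
    _ ≤ B * (ε⁻¹ * δ ^ (1 - c)) := by
        gcongr
        exact integral_zpow_neg_le_zpow_one_sub hc hδ (hpole ht)

lemma abs_div_zpow_le_mul_zpow_neg {x y M d : ℝ} {c : ℤ} (hc : 0 ≤ c) (hd : 0 < d)
    (hx : |x| ≤ M) (hy : d ≤ |y|) : |x / y ^ c| ≤ M * d ^ (-c) := by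
  rw [abs_div, abs_zpow, zpow_neg, ← div_eq_mul_inv]
  exact div_le_div₀ ((abs_nonneg x).trans hx) hx (zpow_pos hd c)
    (zpow_le_zpow_left₀ hc hd.le hy)

lemma rpow_mul_inv_mul_sqrt_zpow {ε : ℝ} (hε : 0 < ε) (a : ℝ) (c : ℤ) :
    ε ^ a * (ε⁻¹ * √ε ^ (1 - c)) = ε ^ (a - ((c : ℝ) + 1) / 2) := by
  rw [sqrt_eq_rpow, ← rpow_intCast, ← rpow_mul hε.le, ← rpow_neg_one, ← rpow_add hε,
    ← rpow_add hε]
  congr 1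
  push_cast
  ring

section SingularIntegral

variable {g V : ℝ → ℝ} {M m p ε t : ℝ} {c : ℤ}

lemma abs_integral_rpow_mul_div_zpow_le_of_right (a : ℝ) (hc : 2 ≤ c) (hm : 0 < m) (hε : 0 < ε)
    (ht : (p + √ε) / ε ≤ t) (hg : ∀ s ∈ Icc ((p + √ε) / ε) t, |g s| ≤ M)
    (hV : ∀ s ∈ Icc ((p + √ε) / ε) t, m * |ε * s - p| ≤ |V s|) :
    |∫ s in ((p + √ε) / ε)..t, ε ^ a * g s / V s ^ c| ≤
      M * m ^ (-c) * ε ^ (a - ((c : ℝ) + 1) / 2) := by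
  have hpointwise (s : ℝ) (hs : s ∈ Icc ((p + √ε) / ε) t) :
      |ε ^ a * g s / V s ^ c| ≤ ε ^ a * M * m ^ (-c) * (ε * s - p) ^ (-c) := by
    have hpole : 0 < ε * s - p := by
      linarith [(div_le_iff₀' hε).1 hs.1, sqrt_pos.2 hε]
    have hVs := hV s hs
    rw [abs_of_pos hpole] at hVs
    rw [mul_assoc (ε ^ a * M), ← mul_zpow]
    refine abs_div_zpow_le_mul_zpow_neg (by lia) (mul_pos hm hpole) ?_ hVs
    rw [abs_mul, abs_of_pos (rpow_pos_of_pos hε a)]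
    gcongr
    exact hg s hs
  calc |∫ s in ((p + √ε) / ε)..t, ε ^ a * g s / V s ^ c|
      ≤ ε ^ a * M * m ^ (-c) * (ε⁻¹ * √ε ^ (1 - c)) := by
        rw [← norm_eq_abs]
        exact norm_integral_le_of_norm_le_mul_zpow_neg hc (sqrt_pos.2 hε) hε ht hpointwise
    _ = M * m ^ (-c) * ε ^ (a - ((c : ℝ) + 1) / 2) := by
        rw [← rpow_mul_inv_mul_sqrt_zpow hε]
        ring

lemma abs_integral_rpow_mul_div_zpow_le_of_left (a : ℝ) (hc : 2 ≤ c) (hm : 0 < m) (hε : 0 < ε)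
    (ht : t ≤ (p - √ε) / ε) (hg : ∀ s ∈ Icc t ((p - √ε) / ε), |g s| ≤ M)
    (hV : ∀ s ∈ Icc t ((p - √ε) / ε), m * |ε * s - p| ≤ |V s|) :
    |∫ s in ((p - √ε) / ε)..t, ε ^ a * g s / V s ^ c| ≤
      M * m ^ (-c) * ε ^ (a - ((c : ℝ) + 1) / 2) := by
  have hend : (-p + √ε) / ε = -((p - √ε) / ε) := by ring
  have hmem {s : ℝ} (hs : s ∈ Icc ((-p + √ε) / ε) (-t)) : -s ∈ Icc t ((p - √ε) / ε) :=
    ⟨le_neg_of_le_neg hs.2, neg_le.1 (hend ▸ hs.1)⟩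
  have hreflect : |∫ s in ((-p + √ε) / ε)..(-t), ε ^ a * g (-s) / V (-s) ^ c| ≤
      M * m ^ (-c) * ε ^ (a - ((c : ℝ) + 1) / 2) := by
    refine abs_integral_rpow_mul_div_zpow_le_of_right a hc hm hε (hend ▸ neg_le_neg ht)
      (fun s hs ↦ hg (-s) (hmem hs)) fun s hs ↦ ?_
    rw [← abs_neg (ε * s - -p), show -(ε * s - -p) = ε * -s - p by ring]
    exact hV (-s) (hmem hs)
  rwa [hend, intervalIntegral.integral_comp_neg (fun s ↦ ε ^ a * g s / V s ^ c), neg_neg, neg_neg,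
    intervalIntegral.integral_symm, abs_neg] at hreflect

lemma abs_integral_rpow_mul_div_zpow_le {W : ℝ → ℝ} {τm τp : ℝ} (a : ℝ) (hc : 2 ≤ c)
    (hm : 0 < m) (hε : 0 < ε) (hτm : τm ≤ p) (hτp : p ≤ τp)
    (hg : ∀ s ∈ Icc (τm / ε) (τp / ε), |g s| ≤ M)
    (hW : ∀ τ ∈ Icc τm τp, m * |τ - p| ≤ |W τ|) :
    (∀ t ∈ Icc (τm / ε) ((p - √ε) / ε),
      |∫ s in ((p - √ε) / ε)..t, ε ^ a * g s / W (ε * s) ^ c| ≤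
        M * m ^ (-c) * ε ^ (a - ((c : ℝ) + 1) / 2)) ∧
    (∀ t ∈ Icc ((p + √ε) / ε) (τp / ε),
      |∫ s in ((p + √ε) / ε)..t, ε ^ a * g s / W (ε * s) ^ c| ≤
        M * m ^ (-c) * ε ^ (a - ((c : ℝ) + 1) / 2)) := by
  have hWε (s : ℝ) (hs : s ∈ Icc (τm / ε) (τp / ε)) : m * |ε * s - p| ≤ |W (ε * s)| :=
    hW _ ⟨(div_le_iff₀' hε).1 hs.1, (le_div_iff₀' hε).1 hs.2⟩
  have hsqrt := sqrt_nonneg ε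
  constructor <;> intro t ht
  · have hsub : Icc t ((p - √ε) / ε) ⊆ Icc (τm / ε) (τp / ε) :=
      Icc_subset_Icc ht.1 (by gcongr; linarith)
    exact abs_integral_rpow_mul_div_zpow_le_of_left a hc hm hε ht.2
      (fun s hs ↦ hg s (hsub hs)) fun s hs ↦ hWε s (hsub hs)
  · have hsub : Icc ((p + √ε) / ε) t ⊆ Icc (τm / ε) (τp / ε) :=
      Icc_subset_Icc (by gcongr; linarith) ht.2
    exact abs_integral_rpow_mul_div_zpow_le_of_right a hc hm hε ht.1
      (fun s hs ↦ hg s (hsub hs)) fun s hs ↦ hWε s (hsub hs)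

end SingularIntegral

theorem lem5_singular_integrals_general {X : Type*} [TopologicalSpace X] {K : Set X}
    (hK : IsCompact K) {f : X → ℝ} (hf : ContinuousOn f K) {ω : ℝ → ℝ} {τm τs τp : ℝ}
    (hτm : τm < τs) (hτp : τs < τp) (hω : ContinuousOn ω (Icc τm τp)) (hωz : ω τs = 0)
    (hω' : deriv ω τs ≠ 0) (hωne : ∀ τ ∈ Icc τm τp, τ ≠ τs → ω τ ≠ 0)
    (a : ℝ) {c : ℤ} (hc : 2 ≤ c) :
    ∃ C > 0, ∀ ε > 0, ∀ γ : ℝ → X, ContinuousOn γ (Icc (τm / ε) (τp / ε)) →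
      MapsTo γ (Icc (τm / ε) (τp / ε)) K →
        (∀ t ∈ Icc (τm / ε) ((τs - √ε) / ε),
          |∫ t₁ in ((τs - √ε) / ε)..t, ε ^ a * f (γ t₁) / ω (ε * t₁) ^ c|
            ≤ C * ε ^ (a - ((c : ℝ) + 1) / 2) ∧
          |∫ t₁ in ((τs - √ε) / ε)..t, ε ^ a * f (γ t₁) / (deriv ω τs * (ε * t₁ - τs)) ^ c|
            ≤ C * ε ^ (a - ((c : ℝ) + 1) / 2)) ∧
        (∀ t ∈ Icc ((τs + √ε) / ε) (τp / ε),
          |∫ t₁ in ((τs + √ε) / ε)..t, ε ^ a * f (γ t₁) / ω (ε * t₁) ^ c|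
            ≤ C * ε ^ (a - ((c : ℝ) + 1) / 2) ∧
          |∫ t₁ in ((τs + √ε) / ε)..t, ε ^ a * f (γ t₁) / (deriv ω τs * (ε * t₁ - τs)) ^ c|
            ≤ C * ε ^ (a - ((c : ℝ) + 1) / 2)) := by
  obtain ⟨M₀, hM₀⟩ := hK.exists_bound_of_continuousOn hf
  obtain ⟨M, hM, hfM⟩ : ∃ M > 0, ∀ x ∈ K, |f x| ≤ M :=
    ⟨max M₀ 1, by positivity, fun x hx ↦ (hM₀ x hx).trans (le_max_left _ _)⟩
  obtain ⟨m₀, hm₀, hωm₀⟩ := exists_pos_forall_mul_norm_sub_le_norm_of_deriv_ne_zero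
    isCompact_Icc (Icc_mem_nhds hτm hτp) hω hωz hω' hωne
  obtain ⟨m, hm, hωm, hΩm⟩ : ∃ m > 0, (∀ τ ∈ Icc τm τp, m * |τ - τs| ≤ |ω τ|) ∧
      ∀ τ ∈ Icc τm τp, m * |τ - τs| ≤ |deriv ω τs * (τ - τs)| := by
    refine ⟨min m₀ |deriv ω τs|, lt_min hm₀ (abs_pos.2 hω'), fun τ hτ ↦ ?_, fun τ _ ↦ ?_⟩
    · exact (mul_le_mul_of_nonneg_right (min_le_left _ _) (abs_nonneg _)).trans (hωm₀ τ hτ)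
    · rw [abs_mul]
      gcongr
      exact min_le_right _ _
  refine ⟨M * m ^ (-c), mul_pos hM (zpow_pos hm _), fun ε hε γ _ hγK ↦ ?_⟩
  have hfγ (s : ℝ) (hs : s ∈ Icc (τm / ε) (τp / ε)) : |f (γ s)| ≤ M := hfM _ (hγK hs)
  obtain ⟨hωleft, hωright⟩ :=
    abs_integral_rpow_mul_div_zpow_le a hc hm hε hτm.le hτp.le hfγ hωm
  obtain ⟨hΩleft, hΩright⟩ :=
    abs_integral_rpow_mul_div_zpow_le a hc hm hε hτm.le hτp.le hfγ hΩm
  exact ⟨fun t ht ↦ ⟨hωleft t ht, hΩleft t ht⟩, fun t ht ↦ ⟨hωright t ht, hΩright t ht⟩⟩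

/-- Lemma 5: estimate of singular integrals outside the resonance zone. -/
theorem lem5_singular_integrals
    (DI Dτ : Set ℝ) (hDIo : IsOpen DI) (hDIc : DI.OrdConnected)
    (hDτo : IsOpen Dτ) (hDτc : Dτ.OrdConnected)
    (ω : ℝ → ℝ) (H₁ : ℝ → ℝ → ℝ → ℝ)
    (hω : ContDiffOn ℝ 4 ω Dτ)
    (hH₁ : ContDiffOn ℝ 4 (fun p : ℝ × ℝ × ℝ => H₁ p.1 p.2.1 p.2.2)
      (DI ×ˢ (univ : Set ℝ) ×ˢ Dτ))
    (hper : ∀ x z, Function.Periodic (fun y => H₁ x y z) (2*π))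
    (τs : ℝ) (hτs : τs ∈ Dτ) (hωz : ω τs = 0) (hω' : 0 < deriv ω τs)
    (hωne : ∀ τ ∈ Dτ, τ ≠ τs → ω τ ≠ 0)
    (τm τp : ℝ) (hτm : τm ∈ Dτ) (hτp : τp ∈ Dτ)
    (h1 : τm < τs) (h2 : τs < τp) (hsym : τp - τs = τs - τm)
    (K : Set (ℝ × ℝ × ℝ)) (hK : IsCompact K)
    (hKD : K ⊆ DI ×ˢ (univ : Set ℝ) ×ˢ Dτ)
    (a : ℝ) (c : ℤ) (hc : 2 ≤ c) (f₀ : ℝ → ℝ → ℝ → ℝ)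
    (hf₀ : ContinuousOn (fun p : ℝ × ℝ × ℝ => f₀ p.1 p.2.1 p.2.2)
      (DI ×ˢ (univ : Set ℝ) ×ˢ Dτ)) :
    ∃ C > 0, ∃ ε₀ > 0, ∀ ε : ℝ, 0 < ε → ε < ε₀ →
      ∀ If φf : ℝ → ℝ,
        (∀ t ∈ Icc (τm/ε) (τp/ε),
            HasDerivAt If (-(ε * pdPhi H₁ (If t) (φf t) (ε*t))) t ∧
            HasDerivAt φf (ω (ε*t) + ε * pdI H₁ (If t) (φf t) (ε*t)) t) →
        (∀ t ∈ Icc (τm/ε) (τp/ε), (If t, φf t, ε*t) ∈ K) →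
        (∀ t ∈ Icc (τm/ε) ((τs - Real.sqrt ε)/ε),
          |∫ t₁ in ((τs - Real.sqrt ε)/ε)..t,
              ε ^ a * f₀ (If t₁) (φf t₁) (ε*t₁) / (ω (ε*t₁))^c|
            ≤ C * ε ^ (a - ((c:ℝ) + 1)/2) ∧
          |∫ t₁ in ((τs - Real.sqrt ε)/ε)..t,
              ε ^ a * f₀ (If t₁) (φf t₁) (ε*t₁) / (deriv ω τs * (ε*t₁ - τs))^c|
            ≤ C * ε ^ (a - ((c:ℝ) + 1)/2)) ∧
        (∀ t ∈ Icc ((τs + Real.sqrt ε)/ε) (τp/ε),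
          |∫ t₁ in ((τs + Real.sqrt ε)/ε)..t,
              ε ^ a * f₀ (If t₁) (φf t₁) (ε*t₁) / (ω (ε*t₁))^c|
            ≤ C * ε ^ (a - ((c:ℝ) + 1)/2) ∧
          |∫ t₁ in ((τs + Real.sqrt ε)/ε)..t,
              ε ^ a * f₀ (If t₁) (φf t₁) (ε*t₁) / (deriv ω τs * (ε*t₁ - τs))^c|
            ≤ C * ε ^ (a - ((c:ℝ) + 1)/2)) := by
  have hsub : Icc τm τp ⊆ Dτ := hDτc.out hτm hτp
  obtain ⟨C, hC, hbound⟩ := lem5_singular_integrals_general hK (hf₀.mono hKD) h1 h2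
    (hω.continuousOn.mono hsub) hωz hω'.ne' (fun τ hτ ↦ hωne τ (hsub hτ)) a hc
  refine ⟨C, hC, 1, one_pos, fun ε hε _ If φf hsol hmem ↦
    hbound ε hε (fun t ↦ (If t, φf t, ε * t)) (fun t ht ↦ ?_) hmem⟩
  obtain ⟨hIf, hφf⟩ := hsol t ht
  exact (hIf.continuousAt.prodMk (hφf.continuousAt.prodMk (by fun_prop))).continuousWithinAt
end
end
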